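/- arXiv:1308.5517 — 2 statements merged into one kernel-verified Lean document; each statement's English description precedes it below -/
import Mathlib

section
/- Every local class of finite Σ-structures enjoys the Adoptive Property. -/
open FirstOrder FirstOrder.Language

universe u v

/-- A finite structure for a relational signature `L`, with underlying set a finite subset of `ℕ`,
given by its relation interpretations (sets of tuples of natural numbers). -/
structure FinStruc (L : FirstOrder.Language.{u, v}) where
  carrier : Finset ℕ
  rel : ∀ ⦃n : ℕ⦄, L.Relations n → Set (Fin n → ℕ)
  rel_mem : ∀ ⦃n : ℕ⦄ (R : L.Relations n) (t : Fin n → ℕ), t ∈ rel R → ∀ i, t i ∈ carrier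

variable {L : FirstOrder.Language.{u, v}}

/-- The first-order structure on the underlying set of a `FinStruc`. -/
instance FinStruc.str [L.IsRelational] (A : FinStruc L) :
    L.Structure {x : ℕ // x ∈ A.carrier} where
  funMap := fun f _ => isEmptyElim f
  RelMap := fun {n} R t => (fun i => (t i : ℕ)) ∈ A.rel R

/-- Satisfaction of a sentence in a `FinStruc`. -/
def FinStruc.Sat [L.IsRelational] (A : FinStruc L) (φ : L.Sentence) : Prop :=
  {x : ℕ // x ∈ A.carrier} ⊨ φ

/-- The General Irreflexivity axiom for a relation symbol `R` and coordinates `i`, `j`: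
`∀ x₁ … xₙ, R (x₁, …, xₙ) → ¬ (xᵢ = xⱼ)`. -/
def giSentence {n : ℕ} (R : L.Relations n) (i j : Fin n) : L.Sentence :=
  BoundedFormula.alls
    ((Relations.boundedFormula R fun k => Term.var (Sum.inr k)).imp
      (Term.bdEqual (Term.var (Sum.inr i)) (Term.var (Sum.inr j))).not)

/-- The General Irreflexivity axiom schema `Φ^Σ_GI`. -/
def GITheory (L : FirstOrder.Language.{u, v}) : L.Theory :=
  { φ | ∃ (n : ℕ) (R : L.Relations n) (i j : Fin n), i ≠ j ∧ φ = giSentence R i j }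

/-- A sentence is local if it has the form `∀ x₁ … xₘ, R (x₁, …, xₘ) → ψ` with `m > 0` and
`ψ` quantifier-free. -/
def IsLocalSentence (φ : L.Sentence) : Prop :=
  ∃ m : ℕ, 0 < m ∧ ∃ (R : L.Relations m) (ψ : L.BoundedFormula Empty m), ψ.IsQF ∧
    φ = BoundedFormula.alls ((Relations.boundedFormula R fun k => Term.var (Sum.inr k)).imp ψ)

/-- A class of finite structures is local if it is the class of models of a set of local
sentences containing the General Irreflexivity axioms. -/
def IsLocalClass [L.IsRelational] (K : Set (FinStruc L)) : Prop :=
  ∃ Φ : L.Theory, (∀ φ ∈ Φ, IsLocalSentence φ) ∧ GITheory L ⊆ Φ ∧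
    K = { A : FinStruc L | ∀ φ ∈ Φ, A.Sat φ }

/-- The `n`-frame of a structure: same underlying set, same interpretations of relation symbols
of arity at most `n`, empty interpretation of all higher-arity relation symbols. -/
def FinStruc.frame (A : FinStruc L) (n : ℕ) : FinStruc L where
  carrier := A.carrier
  rel := fun m R => if m ≤ n then A.rel R else ∅
  rel_mem := by
    intro m R t ht i
    by_cases h : m ≤ n
    · exact A.rel_mem R t (by simpa [h] using ht) i
    · simp [h] at ht

/-- The induced substructure of `B` on a finite set `X`. -/
def FinStruc.restrict (B : FinStruc L) (X : Finset ℕ) : FinStruc L where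
  carrier := B.carrier ∩ X
  rel := fun _ R => { t | t ∈ B.rel R ∧ ∀ i, t i ∈ X }
  rel_mem := fun _ R t ht i => Finset.mem_inter.2 ⟨B.rel_mem R t ht.1 i, ht.2 i⟩

/-- `A` is the induced substructure of `B` on the subset `A.carrier` of `B.carrier`. -/
def FinStruc.IsInducedSub (A B : FinStruc L) : Prop :=
  A.carrier ⊆ B.carrier ∧
    ∀ ⦃n : ℕ⦄ (R : L.Relations n) (t : Fin n → ℕ),
      (∀ i, t i ∈ A.carrier) → (t ∈ A.rel R ↔ t ∈ B.rel R)

/-- `A` is isomorphic to `B`: there is a bijection of the underlying sets preserving all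
relations in both directions. -/
def FinStruc.IsIsoTo (A B : FinStruc L) : Prop :=
  ∃ f : ℕ → ℕ, Set.BijOn f ↑A.carrier ↑B.carrier ∧
    ∀ ⦃n : ℕ⦄ (R : L.Relations n) (t : Fin n → ℕ), (∀ i, t i ∈ A.carrier) →
      (t ∈ A.rel R ↔ (fun i => f (t i)) ∈ B.rel R)

/-- The Adoptive Property. -/
def AdoptiveProperty (K : Set (FinStruc L)) : Prop :=
  ∀ (n : ℕ) (B A A' : FinStruc L), B ∈ K → A ∈ K → A' ∈ K →
    A.IsInducedSub B → A.carrier.card = n → A'.carrier = A.carrier →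
    A'.frame (n - 1) = A.frame (n - 1) →
    ∃ B' ∈ K, B'.carrier = B.carrier ∧ B'.frame (n - 1) = B.frame (n - 1) ∧
      ∀ R : L.Relations n,
        B'.rel R = (B.rel R \ { t | ∀ i, t i ∈ A.carrier }) ∪ A'.rel R

/-- A structure for `L` with underlying set `ℕ`, given by its relation interpretations. -/
structure InfStruc (L : FirstOrder.Language.{u, v}) where
  rel : ∀ ⦃n : ℕ⦄, L.Relations n → Set (Fin n → ℕ)

/-- The first-order structure on `ℕ` determined by an `InfStruc`. -/
def InfStruc.str [L.IsRelational] (M : InfStruc L) : L.Structure ℕ where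
  funMap := fun f _ => isEmptyElim f
  RelMap := fun {n} R t => t ∈ M.rel R

/-- Satisfaction of a sentence in an `InfStruc`. -/
def InfStruc.Sat [L.IsRelational] (M : InfStruc L) (φ : L.Sentence) : Prop :=
  @FirstOrder.Language.Sentence.Realize L ℕ M.str φ

/-- The induced finite substructure of an `InfStruc` on a finite set `X`. -/
def InfStruc.restrict (M : InfStruc L) (X : Finset ℕ) : FinStruc L where
  carrier := X
  rel := fun _ R => { t | t ∈ M.rel R ∧ ∀ i, t i ∈ X }
  rel_mem := fun _ _ _ ht i => ht.2 i

/-- The bundled structures isomorphic to a member of `K`. -/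
def toBundled (L : FirstOrder.Language.{u, v}) [L.IsRelational] (K : Set (FinStruc L)) :
    Set (CategoryTheory.Bundled.{0} L.Structure) :=
  { M | ∃ A ∈ K, Nonempty (M ≃[L] {x : ℕ // x ∈ A.carrier}) }

/-- `K^{X,l}_{A,k}`: the set of `l`-frames of members `B` of `K` with underlying set `X` whose
`k`-frame restricted to the underlying set of `A` is the `k`-frame of `A`. -/
def KsetFr (K : Set (FinStruc L)) (X : Finset ℕ) (l : ℕ) (A : FinStruc L) (k : ℕ) :
    Set (FinStruc L) :=
  { F | ∃ B ∈ K, B.carrier = X ∧ (B.frame k).restrict A.carrier = A.frame k ∧ F = B.frame l }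

/-- `N(S,k)`: the number of distinct `(k+1)`-frames of members of `K` on the underlying set of `S`
whose `k`-frame is the `k`-frame of `S`. -/
noncomputable def Ncount (K : Set (FinStruc L)) (S : FinStruc L) (k : ℕ) : ℕ :=
  (KsetFr K S.carrier (k + 1) S k).ncard

/-!
A quantifier-free property of a tuple depends only on the substructure induced on the entries of
that tuple, so a structure belongs to a local class `K` as soon as it agrees, on the entries of each
tuple it relates, with some member of `K`. Let `A` and `B` in `K` be such that, in arities less
than `n`, `A` is an induced substructure of `B`. Graft `A` onto `B` and discard all relations of
arity greater than `n`. The set `S` of entries of a related tuple has at most `n` elements, so by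
irreflexivity nothing was discarded inside `S`. If `S` lies inside `A`, the new structure agrees
with `A` on `S`. Otherwise `S` meets `A` in at most `n - 1` points, on which `A` and `B` agree,
again by irreflexivity, and the new structure agrees with `B` on `S`.
-/

attribute [ext] FinStruc

namespace FinStruc

section Frame

variable {A B : FinStruc L} {m n : ℕ}

theorem mem_frame_rel {R : L.Relations m} {t : Fin m → ℕ} :
    t ∈ (A.frame n).rel R ↔ m ≤ n ∧ t ∈ A.rel R := by
  by_cases h : m ≤ n <;> simp [frame, h]

theorem frame_frame_of_le (h : m ≤ n) : (A.frame n).frame m = A.frame m := by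
  ext k R t
  · rfl
  · simp only [mem_frame_rel]
    exact ⟨fun ht => ⟨ht.1, ht.2.2⟩, fun ht => ⟨ht.1, ht.1.trans h, ht.2⟩⟩

theorem restrict_frame (S : Finset ℕ) : (A.frame n).restrict S = (A.restrict S).frame n := by
  ext k R t
  · rfl
  · simp only [mem_frame_rel, restrict, Set.mem_ofPred_eq, and_assoc]

theorem restrict_isInducedSub (A : FinStruc L) (S : Finset ℕ) : (A.restrict S).IsInducedSub A :=
  ⟨Finset.inter_subset_left, fun _ _ _ ht =>
    ⟨And.left, fun h => ⟨h, fun i => Finset.mem_of_mem_inter_right (ht i)⟩⟩⟩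

theorem IsInducedSub.frame (h : A.IsInducedSub B) (n : ℕ) :
    (A.frame n).IsInducedSub (B.frame n) :=
  ⟨h.1, fun _ R t ht => by rw [mem_frame_rel, mem_frame_rel, h.2 R t ht]⟩

theorem IsInducedSub.restrict (h : A.IsInducedSub B) (S : Finset ℕ) :
    (A.restrict S).IsInducedSub (B.restrict S) :=
  ⟨Finset.inter_subset_inter_right h.1, fun _ R t ht =>
    and_congr_left' (h.2 R t fun i => Finset.mem_of_mem_inter_left (ht i))⟩

end Frame

section Irreflexive

/-- General Irreflexivity, semantically: related tuples have pairwise distinct entries. -/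
def IsIrreflexive (A : FinStruc L) : Prop :=
  ∀ ⦃m : ℕ⦄ (R : L.Relations m) ⦃t : Fin m → ℕ⦄, t ∈ A.rel R → Function.Injective t

variable {A B : FinStruc L} {m n : ℕ}

theorem IsIrreflexive.restrict (hA : A.IsIrreflexive) (S : Finset ℕ) :
    (A.restrict S).IsIrreflexive :=
  fun _ R _ ht => hA R ht.1

theorem IsIrreflexive.arity_le_card (hA : A.IsIrreflexive) {R : L.Relations m} {t : Fin m → ℕ}
    (ht : t ∈ A.rel R) {S : Finset ℕ} (hS : ∀ i, t i ∈ S) : m ≤ S.card := by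
  simpa using Finset.card_le_card_of_injOn t (s := Finset.univ) (fun i _ => hS i) (hA R ht).injOn

theorem IsIrreflexive.frame_eq_self (hA : A.IsIrreflexive) (hn : A.carrier.card ≤ n) :
    A.frame n = A := by
  ext m R t
  · rfl
  · exact mem_frame_rel.trans (and_iff_right_of_imp fun ht =>
      (hA.arity_le_card ht (A.rel_mem R t ht)).trans hn)

theorem IsIrreflexive.isInducedSub_of_frame (hA : A.IsIrreflexive) (hB : B.IsIrreflexive)
    (hn : A.carrier.card ≤ n) (h : (A.frame n).IsInducedSub (B.frame n)) :
    A.IsInducedSub B := by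
  refine ⟨h.1, fun m R t ht => ?_⟩
  by_cases hm : m ≤ n
  · simpa only [mem_frame_rel, hm, true_and] using h.2 R t ht
  · have hm' : ¬ m ≤ A.carrier.card := fun hle => hm (hle.trans hn)
    exact iff_of_false (fun h' => hm' (hA.arity_le_card h' ht))
      (fun h' => hm' (hB.arity_le_card h' ht))

end Irreflexive

section Graft

/-- The structure obtained from `B` by replacing everything it says about tuples inside the
underlying set of `A` with what `A` says. Taking the union of the underlying sets makes this
total; it is used when the underlying set of `A` is contained in that of `B`. -/
def graft (B A : FinStruc L) : FinStruc L where
  carrier := B.carrier ∪ A.carrier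
  rel := fun _ R => (B.rel R \ { t | ∀ i, t i ∈ A.carrier }) ∪ A.rel R
  rel_mem := by
    rintro m R t (ht | ht) i
    · exact Finset.mem_union_left _ (B.rel_mem R t ht.1 i)
    · exact Finset.mem_union_right _ (A.rel_mem R t ht i)

variable {A B : FinStruc L}

theorem IsIrreflexive.graft (hB : B.IsIrreflexive) (hA : A.IsIrreflexive) :
    (B.graft A).IsIrreflexive :=
  fun _ R _ ht => ht.elim (fun h => hB R h.1) (fun h => hA R h)

theorem frame_graft (n : ℕ) : (B.graft A).frame n = (B.frame n).graft (A.frame n) := by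
  ext m R t
  · rfl
  · by_cases hm : m ≤ n <;> simp [frame, graft, hm]

theorem restrict_graft (S : Finset ℕ) :
    (B.graft A).restrict S = (B.restrict S).graft (A.restrict S) := by
  ext m R t
  · simp only [graft, restrict, Finset.union_inter_distrib_right]
  · simp only [graft, restrict, Set.mem_union, Set.mem_sdiff, Set.mem_ofPred_eq, Finset.mem_inter,
      forall_and]
    tauto

theorem graft_eq_left (h : A.IsInducedSub B) : B.graft A = B := by
  ext m R t
  · simp only [graft, Finset.union_eq_left.2 h.1]
  · have hA := A.rel_mem R t
    have hAB := h.2 R t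
    simp only [graft, Set.mem_union, Set.mem_sdiff, Set.mem_ofPred_eq]
    tauto

theorem graft_eq_right (h : B.carrier ⊆ A.carrier) : B.graft A = A := by
  ext m R t
  · simp only [graft, Finset.union_eq_right.2 h]
  · exact or_iff_right fun ht => ht.2 fun i => h (B.rel_mem R t ht.1 i)

end Graft

section Locality

variable [L.IsRelational] {A B C : FinStruc L} {m : ℕ}

/-- The inclusion of an induced substructure, as an embedding of first-order structures. -/
def IsInducedSub.embedding (h : A.IsInducedSub B) :
    {x : ℕ // x ∈ A.carrier} ↪[L] {x : ℕ // x ∈ B.carrier} where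
  toFun x := ⟨x, h.1 x.2⟩
  inj' _ _ hxy := Subtype.ext (Subtype.mk.inj hxy)
  map_fun' f := isEmptyElim f
  map_rel' R x := (h.2 R (fun i => x i) fun i => (x i).2).symm

theorem realize_iff_of_isInducedSub (hCA : C.IsInducedSub A) (hCB : C.IsInducedSub B)
    {ψ : L.BoundedFormula Empty m} (hψ : ψ.IsQF) (xs : Fin m → {x : ℕ // x ∈ C.carrier}) :
    ψ.Realize default (hCA.embedding ∘ xs) ↔ ψ.Realize default (hCB.embedding ∘ xs) := by
  rw [← Subsingleton.elim (hCA.embedding ∘ default) default,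
    ← Subsingleton.elim (hCB.embedding ∘ default) default,
    hψ.realize_embedding, hψ.realize_embedding]

theorem sat_alls_imp {R : L.Relations m} {ψ : L.BoundedFormula Empty m} :
    A.Sat (BoundedFormula.alls
      ((Relations.boundedFormula R fun k => Term.var (Sum.inr k)).imp ψ)) ↔
    ∀ xs : Fin m → {x : ℕ // x ∈ A.carrier}, (fun i => (xs i : ℕ)) ∈ A.rel R →
      ψ.Realize default xs := by
  rw [Sat, Sentence.Realize, BoundedFormula.realize_alls]
  rfl

theorem sat_of_forall_restrict_eq {φ : L.Sentence} (hφ : IsLocalSentence φ)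
    (h : ∀ ⦃m : ℕ⦄ (R : L.Relations m) (t : Fin m → ℕ), t ∈ A.rel R → ∃ B : FinStruc L,
      B.Sat φ ∧ A.restrict (Finset.univ.image t) = B.restrict (Finset.univ.image t)) :
    A.Sat φ := by
  obtain ⟨m, -, R, ψ, hψ, rfl⟩ := hφ
  refine sat_alls_imp.2 fun xs hxs => ?_
  obtain ⟨B, hB, hAB⟩ := h R _ hxs
  set S := Finset.univ.image fun i => (xs i : ℕ)
  have hS (i : Fin m) : (xs i : ℕ) ∈ S := Finset.mem_image_of_mem _ (Finset.mem_univ i)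
  have hCA : (A.restrict S).IsInducedSub A := A.restrict_isInducedSub S
  have hCB : (A.restrict S).IsInducedSub B := hAB ▸ B.restrict_isInducedSub S
  let ys : Fin m → {x : ℕ // x ∈ (A.restrict S).carrier} :=
    fun i => ⟨xs i, Finset.mem_inter.2 ⟨(xs i).2, hS i⟩⟩
  have hys : (fun i => (ys i : ℕ)) ∈ B.rel R :=
    (hCB.2 R _ fun i => (ys i).2).1 ⟨hxs, hS⟩
  exact (realize_iff_of_isInducedSub hCA hCB hψ ys).2 (sat_alls_imp.1 hB _ hys)

theorem isIrreflexive_of_sat_giTheory (hA : ∀ φ ∈ GITheory L, A.Sat φ) : A.IsIrreflexive := by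
  intro m R t ht i j hij
  by_contra hne
  have hsat := sat_alls_imp.1 (hA _ ⟨m, R, i, j, hne, rfl⟩) (fun i => ⟨t i, A.rel_mem R t ht i⟩) ht
  exact hsat (Subtype.ext hij)

end Locality

end FinStruc

namespace IsLocalClass

variable [L.IsRelational] {K : Set (FinStruc L)} {A B : FinStruc L} {n : ℕ}

theorem isIrreflexive (hK : IsLocalClass K) (hA : A ∈ K) : A.IsIrreflexive := by
  obtain ⟨Φ, -, hGI, rfl⟩ := hK
  exact FinStruc.isIrreflexive_of_sat_giTheory fun φ hφ => hA φ (hGI hφ)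

theorem mem_of_forall_restrict_eq (hK : IsLocalClass K)
    (h : ∀ ⦃m : ℕ⦄ (R : L.Relations m) (t : Fin m → ℕ), t ∈ A.rel R →
      ∃ B ∈ K, A.restrict (Finset.univ.image t) = B.restrict (Finset.univ.image t)) :
    A ∈ K := by
  obtain ⟨Φ, hΦ, -, rfl⟩ := hK
  intro φ hφ
  refine FinStruc.sat_of_forall_restrict_eq (hΦ φ hφ) fun m R t ht => ?_
  obtain ⟨B, hB, hAB⟩ := h R t ht
  exact ⟨B, hB φ hφ, hAB⟩

theorem frame_graft_mem (hK : IsLocalClass K) (hA : A ∈ K) (hB : B ∈ K)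
    (h : (A.frame (n - 1)).IsInducedSub (B.frame (n - 1))) : (B.graft A).frame n ∈ K := by
  have hAirr := hK.isIrreflexive hA
  have hBirr := hK.isIrreflexive hB
  refine hK.mem_of_forall_restrict_eq fun m R t ht => ?_
  set S := Finset.univ.image t
  have hSn : S.card ≤ n :=
    (Finset.card_image_le.trans_eq (Finset.card_fin m)).trans (FinStruc.mem_frame_rel.1 ht).1
  have hframe : ((B.graft A).frame n).restrict S = (B.restrict S).graft (A.restrict S) := by
    rw [FinStruc.restrict_frame, ← FinStruc.restrict_graft]
    exact ((hBirr.graft hAirr).restrict S).frame_eq_self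
      ((Finset.card_le_card Finset.inter_subset_right).trans hSn)
  by_cases hSA : S ⊆ A.carrier
  · refine ⟨A, hA, hframe.trans (FinStruc.graft_eq_right ?_)⟩
    exact Finset.subset_inter (Finset.inter_subset_right.trans hSA) Finset.inter_subset_right
  · refine ⟨B, hB, hframe.trans (FinStruc.graft_eq_left ?_)⟩
    have hlt : (A.carrier ∩ S).card < S.card :=
      Finset.card_lt_card ⟨Finset.inter_subset_right,
        fun hle => hSA (hle.trans Finset.inter_subset_left)⟩
    refine (hAirr.restrict S).isInducedSub_of_frame (hBirr.restrict S)
      (Nat.le_sub_one_of_lt (hlt.trans_le hSn)) ?_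
    simpa only [FinStruc.restrict_frame] using h.restrict S

end IsLocalClass

-- For `n = 0` the truncated `n - 1` is `0`, so the `(n - 1)`-frames still see nullary relations.
theorem statement_4_general [L.IsRelational] {K : Set (FinStruc L)} (hK : IsLocalClass K) {n : ℕ}
    {A B : FinStruc L} (hA : A ∈ K) (hB : B ∈ K)
    (h : (A.frame (n - 1)).IsInducedSub (B.frame (n - 1))) :
    ∃ B' ∈ K, B'.carrier = B.carrier ∧ B'.frame (n - 1) = B.frame (n - 1) ∧
      ∀ R : L.Relations n,
        B'.rel R = (B.rel R \ { t | ∀ i, t i ∈ A.carrier }) ∪ A.rel R := by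
  refine ⟨(B.graft A).frame n, hK.frame_graft_mem hA hB h, Finset.union_eq_left.2 h.1, ?_,
    fun R => if_pos le_rfl⟩
  calc ((B.graft A).frame n).frame (n - 1)
      = (B.graft A).frame (n - 1) := FinStruc.frame_frame_of_le (Nat.sub_le n 1)
    _ = (B.frame (n - 1)).graft (A.frame (n - 1)) := FinStruc.frame_graft (n - 1)
    _ = B.frame (n - 1) := FinStruc.graft_eq_left h

/-- Every local class enjoys the Adoptive Property. -/
theorem statement_4 (L : FirstOrder.Language.{u, v}) [L.IsRelational]
    [∀ n, Finite (L.Relations n)] (K : Set (FinStruc L)) (hK : IsLocalClass K) :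
    AdoptiveProperty K := by
  intro n B A A' hB _ hA' hsub _ hc hfr
  rw [← hc]
  exact statement_4_general hK hA' hB (hfr ▸ hsub.frame (n - 1))
end

section
/- Let K be a local class of finite Σ-structures, let R be the Fraïssé limit of K, and let Th(R) be the complete first-order theory of R. Then Th(R) has quantifier elimination: for every first-order formula φ over Σ with free variables x_1,…,x_n there is a quantifier-free formula ψ with free variables among x_1,…,x_n such that ∀x_1…∀x_n (φ ↔ ψ) belongs to Th(R). -/
open FirstOrder FirstOrder.Language

universe u v

variable {L : FirstOrder.Language.{u, v}}

/-!
Since the signature is relational, two finite tuples with the same atomic type are matched by an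
isomorphism of the substructures they generate; ultrahomogeneity extends it to an automorphism, so
the tuples satisfy the same first-order formulas. General irreflexivity passes from the members of
the class to its Fraïssé limit through the age. It makes a relation symbol informative only on
injective tuples of variables, so finitely many atomic formulas in the given variables determine
the atomic type, and a formula is equivalent to the disjunction of the atomic types realizing it.
-/

section QuantifierFree

variable {M α ι : Type*} {k : ℕ} [Finite ι]

theorem isQF_iSup {A : ι → L.BoundedFormula α k} (hA : ∀ i, (A i).IsQF) :
    (BoundedFormula.iSup A).IsQF := by
  unfold BoundedFormula.iSup
  extract_lets
  induction (Finset.univ : Finset ι).toList with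
  | nil => exact BoundedFormula.isQF_bot
  | cons i l ih => exact (hA i).sup ih

theorem isQF_iInf {A : ι → L.BoundedFormula α k} (hA : ∀ i, (A i).IsQF) :
    (BoundedFormula.iInf A).IsQF := by
  unfold BoundedFormula.iInf
  extract_lets
  induction (Finset.univ : Finset ι).toList with
  | nil => exact BoundedFormula.IsQF.top
  | cons i l ih => exact (hA i).inf ih

variable [L.Structure M] {A : ι → L.Formula α}

theorem exists_isQF_realize_iff_setOf_realize_eq (hA : ∀ i, BoundedFormula.IsQF (A i))
    (T : Set ι) :
    ∃ ψ : L.Formula α, BoundedFormula.IsQF ψ ∧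
      ∀ v : α → M, ψ.Realize v ↔ {i | (A i).Realize v} = T := by
  classical
  refine ⟨Formula.iInf fun i => if i ∈ T then A i else (A i).not, isQF_iInf fun i => ?_,
    fun v => ?_⟩
  · split_ifs
    exacts [hA i, (hA i).not]
  · rw [Formula.realize_iInf, Set.ext_iff]
    refine forall_congr' fun i => ?_
    by_cases hi : i ∈ T <;> simp [hi]

theorem exists_isQF_realize_iff_mem (hA : ∀ i, BoundedFormula.IsQF (A i)) {s : Set (α → M)}
    (hs : ∀ v w, (∀ i, (A i).Realize v ↔ (A i).Realize w) → v ∈ s → w ∈ s) :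
    ∃ ψ : L.Formula α, BoundedFormula.IsQF ψ ∧ ∀ v, v ∈ s ↔ ψ.Realize v := by
  choose ψ hψ hψT using exists_isQF_realize_iff_setOf_realize_eq (M := M) hA
  let types : Set (Set ι) := (fun v => {i | (A i).Realize v}) '' s
  refine ⟨Formula.iSup fun T : types => ψ T, isQF_iSup fun T => hψ T, fun v => ?_⟩
  simp only [Formula.realize_iSup, hψT]
  constructor
  · exact fun hv => ⟨⟨_, v, hv, rfl⟩, rfl⟩
  · rintro ⟨⟨_, w, hw, rfl⟩, hT⟩
    exact hs w v (fun i => (Set.ext_iff.1 hT i).symm) hw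

end QuantifierFree

section AtomicType

variable {M N α : Type*} [L.Structure M] [L.Structure N] {v : α → M}

variable (L) in
/-- Two tuples, possibly in different structures, have the same atomic type. Only equalities and
relations between the variables themselves are compared, which is the usual notion when `L` is
relational. -/
structure SameAtomicType (v : α → M) (w : α → N) : Prop where
  eq_iff : ∀ i j, v i = v j ↔ w i = w j
  relMap_iff : ∀ ⦃m : ℕ⦄ (r : L.Relations m) (f : Fin m → α),
    Structure.RelMap r (v ∘ f) ↔ Structure.RelMap r (w ∘ f)

namespace SameAtomicType

variable [L.IsRelational]

theorem exists_embedding_closure {w : α → N} (h : SameAtomicType L v w) :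
    ∃ F : Substructure.closure L (Set.range v) ↪[L] N,
      ∀ i, F ⟨v i, Substructure.subset_closure ⟨i, rfl⟩⟩ = w i := by
  have exists_index : ∀ x : Substructure.closure L (Set.range v), ∃ i, v i = x := fun x => by
    simpa only [Substructure.mem_closure_iff_of_isRelational, Set.mem_range] using x.2
  choose index v_index using exists_index
  let F : Substructure.closure L (Set.range v) ↪[L] N :=
    { toFun := w ∘ index
      inj' := fun x y hxy => Subtype.ext <| by
        rw [← v_index x, ← v_index y]
        exact (h.eq_iff _ _).2 hxy
      map_fun' := fun f => isEmptyElim f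
      map_rel' := fun r x => by
        have v_index_comp : v ∘ index ∘ x = fun i => (x i : M) := funext fun i => v_index (x i)
        exact (h.relMap_iff r (index ∘ x)).symm.trans (iff_of_eq (congrArg _ v_index_comp)) }
  exact ⟨F, fun i => (h.eq_iff _ _).1 (v_index _)⟩

variable [Finite α] {w : α → M}

theorem exists_equiv_comp_eq (h : SameAtomicType L v w) (hM : L.IsUltrahomogeneous M) :
    ∃ g : M ≃[L] M, g ∘ v = w := by
  obtain ⟨F, hF⟩ := h.exists_embedding_closure
  obtain ⟨g, rfl⟩ := hM _ (Substructure.fg_closure (Set.finite_range v)) F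
  exact ⟨g, funext hF⟩

theorem realize_iff (h : SameAtomicType L v w) (hM : L.IsUltrahomogeneous M) (φ : L.Formula α) :
    φ.Realize v ↔ φ.Realize w := by
  obtain ⟨g, rfl⟩ := h.exists_equiv_comp_eq hM
  exact (StrongHomClass.realize_formula g φ).symm

end SameAtomicType

end AtomicType

section GeneralIrreflexivity

variable {M N : Type*} [L.Structure M] [L.Structure N]

variable (L M) in
/-- General irreflexivity of an `L`-structure `M`: related elements are pairwise distinct. -/
def IsGenerallyIrreflexive : Prop :=
  ∀ ⦃m : ℕ⦄ (r : L.Relations m) (t : Fin m → M), Structure.RelMap r t → Function.Injective t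

theorem realize_giSentence {m : ℕ} (r : L.Relations m) (i j : Fin m) :
    M ⊨ giSentence r i j ↔ ∀ t : Fin m → M, Structure.RelMap r t → t i ≠ t j := by
  simp only [giSentence, Sentence.Realize, BoundedFormula.realize_alls,
    BoundedFormula.realize_imp, BoundedFormula.realize_rel, BoundedFormula.realize_not,
    BoundedFormula.realize_bdEqual, Term.realize_var, Sum.elim_inr, ne_eq]

theorem model_GITheory_iff : M ⊨ GITheory L ↔ IsGenerallyIrreflexive L M := by
  rw [Theory.model_iff]
  constructor
  · intro h m r t hr i j hij
    by_contra hne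
    exact (realize_giSentence r i j).1 (h _ ⟨m, r, i, j, hne, rfl⟩) t hr hij
  · rintro h _ ⟨m, r, i, j, hne, rfl⟩
    exact (realize_giSentence r i j).2 fun t hr => (h r t hr).ne hne

namespace IsGenerallyIrreflexive

theorem of_embedding (hN : IsGenerallyIrreflexive L N) (f : M ↪[L] N) :
    IsGenerallyIrreflexive L M :=
  fun _ r t hr => (hN r (f ∘ t) ((f.map_rel r t).2 hr)).of_comp

theorem of_age (h : ∀ S ∈ L.age M, IsGenerallyIrreflexive L S) : IsGenerallyIrreflexive L M := by
  intro m r t hr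
  let S : L.Substructure M := Substructure.closure L (Set.range t)
  let t' : Fin m → S := fun i => ⟨t i, Substructure.subset_closure ⟨i, rfl⟩⟩
  have t'_injective : Function.Injective t' :=
    h _ (age.fg_substructure (Substructure.fg_closure (Set.finite_range t))) r t' hr
  exact Subtype.val_injective.comp t'_injective

end IsGenerallyIrreflexive

variable [L.IsRelational] {K : Set (FinStruc L)}

theorem IsLocalClass.isGenerallyIrreflexive_of_mem (hK : IsLocalClass K) {A : FinStruc L}
    (hA : A ∈ K) : IsGenerallyIrreflexive L {x : ℕ // x ∈ A.carrier} := by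
  obtain ⟨Φ, -, hGI, rfl⟩ := hK
  exact model_GITheory_iff.1 ((Theory.model_iff _).2 fun φ hφ => hA φ (hGI hφ))

theorem IsLocalClass.isGenerallyIrreflexive_of_age_eq (hK : IsLocalClass K) {R : Type}
    [L.Structure R] (hR : L.age R = toBundled L K) : IsGenerallyIrreflexive L R := by
  refine .of_age fun S hS => ?_
  obtain ⟨A, hA, ⟨e⟩⟩ := hR ▸ hS
  exact (hK.isGenerallyIrreflexive_of_mem hA).of_embedding e.toEmbedding

end GeneralIrreflexivity

section AtomicFormula

variable {M α : Type*}

variable (L α) in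
/-- The equalities between variables in `α` and the relations between pairwise distinct variables in
`α`. Relations with a repeated variable are left out, so that there are only finitely many of these
atoms even if `L` has relation symbols of every arity. -/
inductive IrreflexiveAtom
  | equal (i j : α)
  | rel {m : ℕ} (r : L.Relations m) (f : Fin m ↪ α)

namespace IrreflexiveAtom

instance [Finite α] [∀ m, Finite (L.Relations m)] : Finite (IrreflexiveAtom L α) := by
  have arity_le_card {m : ℕ} (f : Fin m ↪ α) : m ≤ Nat.card α := by
    simpa using Nat.card_le_card_of_injective f f.injective
  let ofBounded :
      (α × α) ⊕ (Σ m : Fin (Nat.card α + 1), L.Relations m × (Fin m ↪ α)) → IrreflexiveAtom L α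
    | .inl (i, j) => .equal i j
    | .inr ⟨_, r, f⟩ => .rel r f
  refine Finite.of_surjective ofBounded ?_
  rintro (⟨i, j⟩ | ⟨r, f⟩)
  · exact ⟨.inl (i, j), rfl⟩
  · exact ⟨.inr ⟨⟨_, Nat.lt_succ_of_le (arity_le_card f)⟩, r, f⟩, rfl⟩

/-- The atom as a first-order formula. -/
def formula : IrreflexiveAtom L α → L.Formula α
  | .equal i j => (Term.var i).equal (Term.var j)
  | .rel r f => r.formula fun k => Term.var (f k)

theorem isQF_formula : ∀ a : IrreflexiveAtom L α, BoundedFormula.IsQF a.formula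
  | .equal _ _ => (BoundedFormula.IsAtomic.equal _ _).isQF
  | .rel _ _ => (BoundedFormula.IsAtomic.rel _ _).isQF

end IrreflexiveAtom

theorem IsGenerallyIrreflexive.sameAtomicType [L.Structure M] (hM : IsGenerallyIrreflexive L M)
    {v w : α → M} (h : ∀ a : IrreflexiveAtom L α, a.formula.Realize v ↔ a.formula.Realize w) :
    SameAtomicType L v w where
  eq_iff i j := by simpa [IrreflexiveAtom.formula] using h (.equal i j)
  relMap_iff _ r f := by
    by_cases hf : Function.Injective f
    · exact h (.rel r ⟨f, hf⟩)
    · exact iff_of_false (fun hr => hf (hM r _ hr).of_comp) fun hr => hf (hM r _ hr).of_comp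

end AtomicFormula

theorem statement_7_general [L.IsRelational] [∀ m, Finite (L.Relations m)] {M α : Type*}
    [L.Structure M] [Finite α] (hM : L.IsUltrahomogeneous M) (hirr : IsGenerallyIrreflexive L M)
    (φ : L.Formula α) :
    ∃ ψ : L.Formula α, BoundedFormula.IsQF ψ ∧ ∀ v : α → M, φ.Realize v ↔ ψ.Realize v :=
  exists_isQF_realize_iff_mem (s := {v | φ.Realize v}) IrreflexiveAtom.isQF_formula
    fun _ _ h => ((hirr.sameAtomicType h).realize_iff hM φ).1

/-- The complete theory of the Fraïssé limit of a local class has quantifier elimination: every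
formula is equivalent, in the Fraïssé limit, to a quantifier-free formula in the same free
variables. -/
theorem statement_7 (L : FirstOrder.Language.{u, v}) [L.IsRelational]
    [∀ n, Finite (L.Relations n)] [Countable (Σ l, L.Functions l)]
    (K : Set (FinStruc L)) (hK : IsLocalClass K)
    (R : Type) [L.Structure R] [Countable R]
    (hR : IsFraisseLimit (toBundled L K) R)
    (n : ℕ) (φ : L.Formula (Fin n)) :
    ∃ ψ : L.Formula (Fin n), BoundedFormula.IsQF ψ ∧
      ∀ v : Fin n → R, φ.Realize v ↔ ψ.Realize v :=
  statement_7_general hR.ultrahomogeneous (hK.isGenerallyIrreflexive_of_age_eq hR.age) φ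
end
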